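/- For a, b ∈ ℂ with Re a > 0, Re b > 0 and for −1 ≤ x ≤ 1, ∫_{−1}^1 (1 − tx)^{a−1} (1 − t²)^{b−1} dt = B(1/2, b) · ₂F₁((1−a)/2, (2−a)/2; b + 1/2; x²), where B denotes the Euler beta function. -/

import Mathlib

open MeasureTheory intervalIntegral

/-- The Gauss hypergeometric function `₂F₁(a,b;c;z)` as a series. -/
noncomputable def hyp2F1 (a b c z : ℂ) : ℂ :=
  ∑' n : ℕ, ((ascPochhammer ℂ n).eval a * (ascPochhammer ℂ n).eval b /
    ((ascPochhammer ℂ n).eval c * (Nat.factorial n : ℂ))) * z ^ n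

/-- The Euler beta function `B(x,y) = Γ(x)Γ(y)/Γ(x+y)`. -/
noncomputable def eulerBeta (x y : ℂ) : ℂ :=
  Complex.Gamma x * Complex.Gamma y / Complex.Gamma (x + y)

theorem poch_prod (n : ℕ) (s : ℂ) :
    (ascPochhammer ℂ n).eval s = ∏ j ∈ Finset.range n, (s + j) := by
  induction n with
  | zero => simp
  | succ n ih => rw [ascPochhammer_succ_eval, ih, Finset.prod_range_succ]

theorem poch_asymp (s : ℂ) (hs : ∀ m : ℕ, s ≠ -m) :
    Filter.Tendsto (fun n : ℕ => ‖(ascPochhammer ℂ n).eval s‖ / (n.factorial : ℝ) *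
      (n : ℝ) ^ (1 - s.re)) Filter.atTop (nhds ‖Complex.Gamma s‖⁻¹) := by
  have h1 := ((Complex.GammaSeq_tendsto_Gamma s).inv₀ (Complex.Gamma_ne_zero hs)).norm
  have h2 : Filter.Tendsto (fun n : ℕ => ‖((n : ℂ) / (n + s))‖) Filter.atTop (nhds ‖(1 : ℂ)‖) :=
    (tendsto_natCast_div_add_atTop s).norm
  have h3 := h1.mul h2
  rw [norm_one, mul_one, norm_inv] at h3
  refine h3.congr' ?_
  filter_upwards [Filter.eventually_gt_atTop 0] with n hn
  have hsn : s + n ≠ 0 := fun h => hs n (eq_neg_of_add_eq_zero_left h)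
  have hn' : (0 : ℝ) < n := by exact_mod_cast hn
  rw [Complex.GammaSeq, ← poch_prod, ascPochhammer_succ_eval]
  simp only [norm_inv, norm_div, norm_mul, Complex.norm_natCast_cpow_of_pos hn,
    Complex.norm_natCast, add_comm (n : ℂ) s]
  rw [Real.rpow_sub hn', Real.rpow_one]
  have h4 : ‖s + n‖ ≠ 0 := norm_ne_zero_iff.mpr hsn
  have h5 := (Real.rpow_pos_of_pos hn' s.re).ne'
  have h6 : (n.factorial : ℝ) ≠ 0 := by positivity
  field_simp

theorem poch_bigO (s : ℂ) :
    (fun n : ℕ => (ascPochhammer ℂ n).eval s / (n.factorial : ℂ)) =O[Filter.atTop]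
      (fun n : ℕ => (n : ℝ) ^ (s.re - 1)) := by
  by_cases hs : ∀ m : ℕ, s ≠ -m
  · have h := (poch_asymp s hs).isBigO_one ℝ
    have h2 := h.mul (Asymptotics.isBigO_refl (fun n : ℕ => (n : ℝ) ^ (s.re - 1)) Filter.atTop)
    refine Asymptotics.IsBigO.congr' (Asymptotics.IsBigO.of_norm_left ?_) .rfl .rfl
    refine h2.congr' ?_ ?_
    · filter_upwards [Filter.eventually_gt_atTop 0] with n hn
      have hn' : (0 : ℝ) < n := by exact_mod_cast hn
      rw [mul_assoc, ← Real.rpow_add hn']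
      simp
    · exact .of_forall fun n => one_mul _
  · push Not at hs
    obtain ⟨m, rfl⟩ := hs
    refine Asymptotics.IsBigO.congr' (Asymptotics.isBigO_zero _ _) ?_ .rfl
    filter_upwards [Filter.eventually_gt_atTop m] with n hn
    rw [ascPochhammer_eval_neg_coe_nat_of_lt hn]; simp

theorem beta_bigO (β : ℝ) (hβ : 0 < β) :
    (fun n : ℕ => Complex.betaIntegral β (n + 1)) =O[Filter.atTop]
      (fun n : ℕ => (n : ℝ) ^ (-β)) := by
  have h := (Complex.GammaSeq_tendsto_Gamma β).isBigO_one ℝ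
  have h2 := h.norm_left.mul (Asymptotics.isBigO_refl (fun n : ℕ => (n : ℝ) ^ (-β)) Filter.atTop)
  refine Asymptotics.IsBigO.of_norm_left ?_
  refine h2.congr' ?_ ?_
  · filter_upwards [Filter.eventually_gt_atTop 0] with n hn
    have hn' : (0 : ℝ) < n := by exact_mod_cast hn
    rw [Complex.GammaSeq_eq_betaIntegral_of_re_pos (by simpa), norm_mul,
      Complex.norm_natCast_cpow_of_pos hn, Complex.ofReal_re, Real.rpow_neg hn'.le]
    have h5 := (Real.rpow_pos_of_pos hn' β).ne'
    field_simp
  · exact .of_forall fun n => one_mul _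

theorem summ_main (a : ℂ) (β x : ℝ) (ha : 0 < a.re) (hβ : 0 < β) (hx : 0 ≤ x) (hx' : x ≤ 1)
    (h : x < 1 ∨ 1 < a.re + β) :
    Summable (fun n : ℕ => ‖(ascPochhammer ℂ n).eval (1 - a) / (n.factorial : ℂ)‖ * x ^ n *
      ‖Complex.betaIntegral β (n + 1)‖) := by
  have h1 := (((poch_bigO (1 - a)).norm_left.mul
    (Asymptotics.isBigO_refl (fun n : ℕ => x ^ n) Filter.atTop))).mul (beta_bigO β hβ).norm_left
  rcases h with h | h
  · refine summable_of_isBigO_nat (summable_geometric_of_lt_one hx h) (h1.trans ?_)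
    refine Asymptotics.IsBigO.of_bound 1 ?_
    filter_upwards [Filter.eventually_gt_atTop 0] with n hn
    have hn' : (1 : ℝ) ≤ n := by exact_mod_cast hn
    have e1 : (n : ℝ) ^ ((1 - a).re - 1) ≤ 1 := Real.rpow_le_one_of_one_le_of_nonpos hn' (by simp; exact ha.le)
    have e2 : (n : ℝ) ^ (-β) ≤ 1 := Real.rpow_le_one_of_one_le_of_nonpos hn' (by linarith)
    have e3 : 0 ≤ x ^ n := by positivity
    have e4 : 0 ≤ (n : ℝ) ^ ((1 - a).re - 1) := by positivity
    have e5 : 0 ≤ (n : ℝ) ^ (-β) := by positivity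
    rw [Real.norm_of_nonneg (by positivity), Real.norm_of_nonneg e3, one_mul]
    calc _ ≤ 1 * x ^ n * 1 := by gcongr
      _ = _ := by ring
  · refine summable_of_isBigO_nat ((Real.summable_nat_rpow (p := -(a.re + β))).mpr (by linarith)) (h1.trans ?_)
    refine Asymptotics.IsBigO.of_bound 1 ?_
    filter_upwards [Filter.eventually_gt_atTop 0] with n hn
    have hn' : (0 : ℝ) < n := by exact_mod_cast hn
    have e3 : 0 ≤ x ^ n := by positivity
    have e3' : x ^ n ≤ 1 := pow_le_one₀ hx hx'
    rw [Real.norm_of_nonneg (by positivity), Real.norm_of_nonneg (by positivity), one_mul]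
    calc _ ≤ (n : ℝ) ^ ((1 - a).re - 1) * 1 * (n : ℝ) ^ (-β) := by gcongr
      _ = _ := by
        rw [mul_one, ← Real.rpow_add hn']; congr 1; simp; ring

theorem binom_hasSum (a z : ℂ) (hz : ‖z‖ < 1) :
    HasSum (fun n : ℕ => (ascPochhammer ℂ n).eval (1 - a) / (n.factorial : ℂ) * z ^ n)
      ((1 - z) ^ (a - 1)) := by
  have h := (Complex.one_div_one_sub_cpow_hasFPowerSeriesOnBall_zero (1 - a)).hasSum (y := z)
    (by
      rw [Metric.mem_eball, edist_zero_right, ← ofReal_norm, ENNReal.ofReal_lt_one]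
      exact hz)
  have e1 : 1 / (1 - (0 + z)) ^ (1 - a) = (1 - z) ^ (a - 1) := by
    rw [zero_add, one_div, ← Complex.cpow_neg]; congr 1; ring
  rw [e1] at h
  have e2 : (fun n : ℕ => (ascPochhammer ℂ n).eval (1 - a) / (n.factorial : ℂ) * z ^ n) =
      fun n : ℕ => (FormalMultilinearSeries.ofScalars ℂ
        (fun n => Ring.choose (1 - a + (n : ℂ) - 1) n) n) fun _ => z := by
    ext n
    rw [FormalMultilinearSeries.ofScalars_apply_eq, smul_eq_mul]
    congr 1
    rw [← Ring.multichoose_eq]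
    have := Ring.factorial_nsmul_multichoose_eq_ascPochhammer (1 - a) n
    rw [Polynomial.ascPochhammer_smeval_eq_eval, nsmul_eq_mul] at this
    have n4 : (n.factorial : ℂ) ≠ 0 := by exact_mod_cast n.factorial_ne_zero
    rw [← this]
    field_simp
  rw [e2]
  exact h

theorem Gamma_add_nat (s : ℂ) (hs : 0 < s.re) (k : ℕ) :
    Complex.Gamma (s + k) = (ascPochhammer ℂ k).eval s * Complex.Gamma s := by
  induction k with
  | zero => simp
  | succ k ih =>
    rw [Nat.cast_succ, ← add_assoc, Complex.Gamma_add_one, ih, ascPochhammer_succ_eval]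
    · ring
    · intro h
      have := congrArg Complex.re h
      simp at this
      have : (0 : ℝ) ≤ k := k.cast_nonneg
      linarith

theorem poch_dup (s : ℂ) (k : ℕ) :
    (ascPochhammer ℂ (2 * k)).eval s =
      4 ^ k * (ascPochhammer ℂ k).eval (s / 2) * (ascPochhammer ℂ k).eval ((s + 1) / 2) := by
  induction k with
  | zero => simp
  | succ k ih =>
    rw [show 2 * (k + 1) = 2 * k + 1 + 1 by ring]
    simp only [ascPochhammer_succ_eval, ih]
    push_cast
    ring

theorem poch_ne (s : ℂ) (hs : 0 < s.re) (k : ℕ) : (ascPochhammer ℂ k).eval s ≠ 0 := by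
  rw [poch_prod, Finset.prod_ne_zero_iff]
  intro j _ h
  have := congrArg Complex.re h
  simp at this
  have : (0 : ℝ) ≤ j := j.cast_nonneg
  linarith

theorem coef_eq (a b : ℂ) (hb : 0 < b.re) (k : ℕ) :
    (ascPochhammer ℂ (2 * k)).eval (1 - a) / ((2 * k).factorial : ℂ) *
      Complex.betaIntegral (k + 1 / 2) b =
    Complex.Gamma (1 / 2) * Complex.Gamma b / Complex.Gamma (1 / 2 + b) *
      ((ascPochhammer ℂ k).eval ((1 - a) / 2) * (ascPochhammer ℂ k).eval ((2 - a) / 2) /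
    ((ascPochhammer ℂ k).eval (b + 1 / 2) * (Nat.factorial k : ℂ))) := by
  have hh : 0 < ((1 / 2 : ℂ)).re := by norm_num
  have hk : 0 < ((k : ℂ) + 1 / 2).re := by simp; positivity
  have hbh : 0 < (b + 1 / 2).re := by rw [Complex.add_re]; linarith
  have h1 := Complex.Gamma_mul_Gamma_eq_betaIntegral hk hb
  rw [show (k : ℂ) + 1 / 2 + b = b + 1 / 2 + k by ring, Gamma_add_nat _ hbh,
    add_comm (k : ℂ), Gamma_add_nat _ hh] at h1
  have h2 : ((2 * k).factorial : ℂ) = 4 ^ k * (ascPochhammer ℂ k).eval (1 / 2) * k.factorial := by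
    have := poch_dup 1 k
    rw [ascPochhammer_eval_one, show ((1 : ℂ) + 1) / 2 = 1 by norm_num, ascPochhammer_eval_one] at this
    exact this
  rw [poch_dup, h2, show (1 - a + 1) / 2 = (2 - a) / 2 by ring, add_comm (k : ℂ), add_comm (1 / 2) b]
  have n1 := poch_ne _ hh k
  have n2 := poch_ne _ hbh k
  have n3 := Complex.Gamma_ne_zero_of_re_pos hbh
  have n4 : (k.factorial : ℂ) ≠ 0 := by exact_mod_cast k.factorial_ne_zero
  have h3 : Complex.betaIntegral (1 / 2 + k) b = (ascPochhammer ℂ k).eval (1 / 2) * Complex.Gamma (1 / 2)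
     * Complex.Gamma b / ((ascPochhammer ℂ k).eval (b + 1 / 2) * Complex.Gamma (b + 1 / 2)) := by
    rw [h1, eq_div_iff (mul_ne_zero n2 n3)]; ring
  rw [h3]
  generalize (ascPochhammer ℂ k).eval (b + 1 / 2) = q at *
  generalize (ascPochhammer ℂ k).eval (1 / 2) = q1 at *
  generalize Complex.Gamma (b + 1 / 2) = q2 at *
  field_simp

theorem even_lem {E : Type*} [NormedAddCommGroup E] [NormedSpace ℝ E] (f : ℝ → E)
    (hf : ∀ t, f (-t) = f t) (hi : IntervalIntegrable f volume 0 1) :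
    IntervalIntegrable f volume (-1) 1 ∧ ∫ t in (-1 : ℝ)..1, f t = (2 : ℝ) • ∫ t in (0 : ℝ)..1, f t := by
  have h1 : IntervalIntegrable f volume (-1) 0 := by
    rw [IntervalIntegrable.iff_comp_neg]
    simpa [hf] using hi.symm
  refine ⟨h1.trans hi, ?_⟩
  rw [← integral_add_adjacent_intervals h1 hi, two_smul]
  congr 1
  have := intervalIntegral.integral_comp_neg (a := 0) (b := 1) f
  simp only [hf, neg_zero] at this
  exact this.symm

theorem g_int (n : ℕ) (β : ℝ) (hβ : 0 < β) :
    IntegrableOn (fun t : ℝ => |t| ^ n * (1 - |t|) ^ (β - 1)) (Set.Ioo (-1) 1) ∧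
    ∫ t in Set.Ioo (-1 : ℝ) 1, |t| ^ n * (1 - |t|) ^ (β - 1) ≤
      2 * ‖Complex.betaIntegral β (n + 1)‖ := by
  have key : ∀ t ∈ Set.Ioo (0 : ℝ) 1, ((t : ℂ) ^ (((n : ℂ) + 1) - 1) * (1 - (t : ℂ)) ^ ((β : ℂ) - 1))
      = ((|t| ^ n * (1 - |t|) ^ (β - 1) : ℝ) : ℂ) := by
    intro t ht
    rw [abs_of_pos ht.1, add_sub_cancel_right, Complex.cpow_natCast]
    push_cast
    rw [Complex.ofReal_cpow (by linarith [ht.2])]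
    push_cast; rfl
  have hc := Complex.betaIntegral_convergent (u := n + 1) (v := β) (by simp; positivity) (by simpa)
  rw [intervalIntegrable_iff_integrableOn_Ioo_of_le zero_le_one] at hc
  have hc2 : IntegrableOn (fun t : ℝ => ((|t| ^ n * (1 - |t|) ^ (β - 1) : ℝ) : ℂ)) (Set.Ioo 0 1) :=
    hc.congr_fun key measurableSet_Ioo
  have hc3 : IntervalIntegrable (fun t : ℝ => |t| ^ n * (1 - |t|) ^ (β - 1)) volume 0 1 := by
    rw [intervalIntegrable_iff_integrableOn_Ioo_of_le zero_le_one]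
    exact hc2.re
  obtain ⟨e1, e2⟩ := even_lem _ (fun t => by simp) hc3
  rw [intervalIntegrable_iff_integrableOn_Ioo_of_le (by norm_num)] at e1
  refine ⟨e1, ?_⟩
  rw [← integral_Ioc_eq_integral_Ioo, ← intervalIntegral.integral_of_le (by norm_num), e2, smul_eq_mul,
    Complex.betaIntegral_symm, Complex.betaIntegral, intervalIntegral.integral_of_le zero_le_one,
    intervalIntegral.integral_of_le zero_le_one, integral_Ioc_eq_integral_Ioo,
    integral_Ioc_eq_integral_Ioo, setIntegral_congr_fun measurableSet_Ioo key, integral_complex_ofReal]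
  gcongr
  rw [Complex.norm_real]
  exact le_abs_self _

theorem w_norm (n : ℕ) (b : ℂ) (t : ℝ) (ht : t ∈ Set.Ioo (-1 : ℝ) 1) :
    ‖(t : ℂ) ^ n * ((1 - t ^ 2 : ℝ) : ℂ) ^ (b - 1)‖ ≤
      2 ^ |b.re - 1| * (|t| ^ n * (1 - |t|) ^ (b.re - 1)) := by
  have h1 : |t| < 1 := abs_lt.mpr ht
  have h0 := abs_nonneg t
  have h2 : 1 - t ^ 2 = (1 + |t|) * (1 - |t|) := by rw [← sq_abs t]; ring
  have h3 : 0 < 1 - t ^ 2 := by rw [h2]; apply mul_pos <;> linarith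
  rw [norm_mul, norm_pow, Complex.norm_real, Complex.norm_cpow_eq_rpow_re_of_pos h3, h2,
    Real.mul_rpow (by linarith) (by linarith)]
  have h4 : (1 + |t|) ^ (b - 1).re ≤ 2 ^ |b.re - 1| := by
    calc (1 + |t|) ^ (b - 1).re ≤ (1 + |t|) ^ |b.re - 1| :=
          Real.rpow_le_rpow_of_exponent_le (by linarith) (by simpa using le_abs_self (b.re - 1))
      _ ≤ _ := Real.rpow_le_rpow (by linarith) (by linarith) (abs_nonneg _)
  have h5 : 0 ≤ (1 - |t|) ^ (b.re - 1) := Real.rpow_nonneg (by linarith) _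
  have h6 : (b - 1).re = b.re - 1 := by simp
  rw [h6] at h4 ⊢
  calc _ = (1 + |t|) ^ (b.re - 1) * (|t| ^ n * (1 - |t|) ^ (b.re - 1)) := by rw [Real.norm_eq_abs]; ring
    _ ≤ _ := by gcongr

theorem w_int (n : ℕ) (b : ℂ) (hb : 0 < b.re) :
    IntegrableOn (fun t : ℝ => (t : ℂ) ^ n * ((1 - t ^ 2 : ℝ) : ℂ) ^ (b - 1)) (Set.Ioo (-1) 1) ∧
    ∫ t in Set.Ioo (-1 : ℝ) 1, ‖(t : ℂ) ^ n * ((1 - t ^ 2 : ℝ) : ℂ) ^ (b - 1)‖ ≤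
      2 ^ |b.re - 1| * (2 * ‖Complex.betaIntegral b.re (n + 1)‖) := by
  obtain ⟨g1, g2⟩ := g_int n b.re hb
  have g3 := g1.const_mul (2 ^ |b.re - 1|)
  have hi : IntegrableOn (fun t : ℝ => (t : ℂ) ^ n * ((1 - t ^ 2 : ℝ) : ℂ) ^ (b - 1)) (Set.Ioo (-1) 1) := by
    refine Integrable.mono' g3 ?_ ?_
    · apply Measurable.aestronglyMeasurable
      apply Measurable.mul
      · fun_prop
      · apply Measurable.pow_const
        fun_prop
    · exact (ae_restrict_iff' measurableSet_Ioo).mpr (.of_forall fun t ht => w_norm n b t ht)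
  refine ⟨hi, ?_⟩
  calc _ ≤ ∫ t in Set.Ioo (-1 : ℝ) 1, 2 ^ |b.re - 1| * (|t| ^ n * (1 - |t|) ^ (b.re - 1)) :=
        setIntegral_mono_on hi.norm g3 measurableSet_Ioo fun t ht => w_norm n b t ht
    _ ≤ _ := by
      rw [MeasureTheory.integral_const_mul]; gcongr

theorem int_odd (k : ℕ) (b : ℂ) :
    ∫ t in Set.Ioo (-1 : ℝ) 1, (t : ℂ) ^ (2 * k + 1) * ((1 - t ^ 2 : ℝ) : ℂ) ^ (b - 1) = 0 := by
  rw [← integral_Ioc_eq_integral_Ioo, ← intervalIntegral.integral_of_le (by norm_num)]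
  have := intervalIntegral.integral_comp_neg (a := -1) (b := 1)
    (fun t : ℝ => (t : ℂ) ^ (2 * k + 1) * ((1 - t ^ 2 : ℝ) : ℂ) ^ (b - 1))
  have h2 : ∀ t : ℝ, ((-t : ℝ) : ℂ) ^ (2 * k + 1) * ((1 - (-t) ^ 2 : ℝ) : ℂ) ^ (b - 1) =
      -((t : ℂ) ^ (2 * k + 1) * ((1 - t ^ 2 : ℝ) : ℂ) ^ (b - 1)) := by
    intro t
    rw [neg_sq, Complex.ofReal_neg, Odd.neg_pow ⟨k, rfl⟩]; ring
  simp only [h2, intervalIntegral.integral_neg, neg_neg] at this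
  exact self_eq_neg.mp this.symm

theorem int_even (k : ℕ) (b : ℂ) (hb : 0 < b.re) :
    ∫ t in Set.Ioo (-1 : ℝ) 1, (t : ℂ) ^ (2 * k) * ((1 - t ^ 2 : ℝ) : ℂ) ^ (b - 1) =
      Complex.betaIntegral (k + 1 / 2) b := by
  have hi := (w_int (2 * k) b hb).1
  have hi2 : IntervalIntegrable (fun t : ℝ => (t : ℂ) ^ (2 * k) * ((1 - t ^ 2 : ℝ) : ℂ) ^ (b - 1))
      volume 0 1 := by
    rw [intervalIntegrable_iff_integrableOn_Ioo_of_le zero_le_one]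
    exact hi.mono_set (Set.Ioo_subset_Ioo_left (by norm_num))
  rw [← integral_Ioc_eq_integral_Ioo, ← intervalIntegral.integral_of_le (by norm_num),
    (even_lem _ (fun t => by rw [neg_sq, Complex.ofReal_neg, Even.neg_pow ⟨k, by ring⟩]) hi2).2,
    Complex.betaIntegral,
    intervalIntegral.integral_of_le zero_le_one,
    intervalIntegral.integral_of_le zero_le_one, integral_Ioc_eq_integral_Ioo,
    integral_Ioc_eq_integral_Ioo]
  have him : (fun t : ℝ => t ^ 2) '' Set.Ioo 0 1 = Set.Ioo 0 1 := by
    ext u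
    constructor
    · rintro ⟨t, ⟨h0, h1⟩, rfl⟩
      exact ⟨by positivity, by nlinarith⟩
    · rintro ⟨h0, h1⟩
      refine ⟨√u, ⟨Real.sqrt_pos.mpr h0, ?_⟩, Real.sq_sqrt h0.le⟩
      rw [Real.sqrt_lt' one_pos]; simpa
  have := integral_image_eq_integral_abs_deriv_smul (s := Set.Ioo (0 : ℝ) 1) (f := fun t => t ^ 2)
    (f' := fun t => 2 * t) measurableSet_Ioo
    (fun t _ => by simpa using (hasDerivAt_pow 2 t).hasDerivWithinAt)
    (fun s hs t ht h => (pow_left_inj₀ hs.1.le ht.1.le two_ne_zero).mp h)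
    (fun u : ℝ => (u : ℂ) ^ ((k : ℂ) + 1 / 2 - 1) * (1 - (u : ℂ)) ^ (b - 1))
  rw [him] at this
  rw [this, ← MeasureTheory.integral_smul]
  refine setIntegral_congr_fun measurableSet_Ioo fun t ht => ?_
  have ht0 : 0 < t := ht.1
  have e : ((t ^ 2 : ℝ) : ℂ) ^ ((k : ℂ) + 1 / 2 - 1) * t = (t : ℂ) ^ (2 * k) := by
    have : (k : ℂ) + 1 / 2 - 1 = ((k - 1 / 2 : ℝ) : ℂ) := by push_cast; ring
    rw [this, ← Complex.ofReal_cpow (by positivity), ← Complex.ofReal_mul, ← Complex.ofReal_pow]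
    congr 1
    rw [← Real.rpow_natCast t 2, ← Real.rpow_mul ht0.le]
    nth_rewrite 2 [← Real.rpow_one t]
    rw [← Real.rpow_add ht0, ← Real.rpow_natCast]
    congr 1; push_cast; ring
  simp only [Complex.real_smul]
  rw [abs_of_pos (by linarith), ← e]
  push_cast
  ring

theorem main_hasSum (a b : ℂ) (ha : 0 < a.re) (hb : 0 < b.re) (x : ℝ) (hx : 0 ≤ x)
    (hx' : x ≤ 1) (h : x < 1 ∨ 1 < a.re + b.re) :
    HasSum (fun n : ℕ => (ascPochhammer ℂ n).eval (1 - a) / (n.factorial : ℂ) * (x : ℂ) ^ n *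
        ∫ t in Set.Ioo (-1 : ℝ) 1, (t : ℂ) ^ n * ((1 - t ^ 2 : ℝ) : ℂ) ^ (b - 1))
      (∫ t in Set.Ioo (-1 : ℝ) 1,
        ((1 - t * x : ℝ) : ℂ) ^ (a - 1) * ((1 - t ^ 2 : ℝ) : ℂ) ^ (b - 1)) := by
  have hs := summ_main a b.re x ha hb hx hx' h
  have key := hasSum_integral_of_summable_integral_norm
    (μ := volume.restrict (Set.Ioo (-1 : ℝ) 1))
    (F := fun (n : ℕ) (t : ℝ) => (ascPochhammer ℂ n).eval (1 - a) / (n.factorial : ℂ) * (x : ℂ) ^ n *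
      ((t : ℂ) ^ n * ((1 - t ^ 2 : ℝ) : ℂ) ^ (b - 1)))
    (fun n => (w_int n b hb).1.const_mul _) ?_
  · simp only [MeasureTheory.integral_const_mul] at key
    suffices hE : ∀ t ∈ Set.Ioo (-1 : ℝ) 1,
        ((1 - t * x : ℝ) : ℂ) ^ (a - 1) * ((1 - t ^ 2 : ℝ) : ℂ) ^ (b - 1) =
        ∑' n : ℕ, (ascPochhammer ℂ n).eval (1 - a) / (n.factorial : ℂ) * (x : ℂ) ^ n *
          ((t : ℂ) ^ n * ((1 - t ^ 2 : ℝ) : ℂ) ^ (b - 1)) by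
      rw [setIntegral_congr_fun measurableSet_Ioo hE]
      exact key
    intro t ht
    have h1 : |t| < 1 := abs_lt.mpr ht
    have hz : ‖((t * x : ℝ) : ℂ)‖ < 1 := by
      rw [Complex.norm_real, Real.norm_eq_abs, abs_mul, abs_of_nonneg hx]
      nlinarith [abs_nonneg t]
    have h2 := ((binom_hasSum a _ hz).mul_right (((1 - t ^ 2 : ℝ) : ℂ) ^ (b - 1))).tsum_eq
    rw [show ((1 - t * x : ℝ) : ℂ) = 1 - ((t * x : ℝ) : ℂ) by push_cast; ring, ← h2]
    refine tsum_congr fun n => ?_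
    push_cast
    rw [mul_pow]
    ring
  · refine Summable.of_nonneg_of_le (fun n => integral_nonneg fun t => norm_nonneg _) (fun n => ?_)
      (hs.mul_left (2 ^ |b.re - 1| * 2))
    have h3 := (w_int n b hb).2
    simp only [norm_mul _ ((_ : ℂ) * (_ : ℂ) ^ (b - 1)), norm_mul _ ((x : ℂ) ^ n)]
    rw [MeasureTheory.integral_const_mul, norm_pow, Complex.norm_real, Real.norm_of_nonneg hx]
    calc _ ≤ ‖(ascPochhammer ℂ n).eval (1 - a) / (n.factorial : ℂ)‖ * x ^ n *
          (2 ^ |b.re - 1| * (2 * ‖Complex.betaIntegral b.re (n + 1)‖)) := by gcongr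
      _ = _ := by ring

theorem good_case (a b : ℂ) (ha : 0 < a.re) (hb : 0 < b.re) (x : ℝ) (hx : 0 ≤ x)
    (hx' : x ≤ 1) (h : x < 1 ∨ 1 < a.re + b.re) :
    (∫ t in (-1 : ℝ)..1, ((1 - t * x : ℝ) : ℂ) ^ (a - 1) * ((1 - t ^ 2 : ℝ) : ℂ) ^ (b - 1)) =
      eulerBeta (1 / 2) b * hyp2F1 ((1 - a) / 2) ((2 - a) / 2) (b + 1 / 2) ((x : ℂ) ^ 2) := by
  rw [intervalIntegral.integral_of_le (by norm_num), integral_Ioc_eq_integral_Ioo]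
  have h1 := main_hasSum a b ha hb x hx hx' h
  have hinj : Function.Injective (fun k : ℕ => 2 * k) := fun i j h => by simpa using h
  rw [← hinj.hasSum_iff] at h1
  · rw [← h1.tsum_eq, hyp2F1, eulerBeta, ← tsum_mul_left]
    refine tsum_congr fun k => ?_
    simp only [Function.comp]
    rw [int_even k b hb, ← mul_assoc, ← coef_eq a b hb k, pow_mul]
    ring
  · intro n hn
    rcases Nat.even_or_odd' n with ⟨k, rfl | rfl⟩
    · exact absurd ⟨k, rfl⟩ hn
    · rw [int_odd, mul_zero]

theorem bad_int (a b : ℂ) (h : a.re + b.re ≤ 1) :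
    ¬ IntervalIntegrable (fun t : ℝ => ((1 - t * (1 : ℝ) : ℝ) : ℂ) ^ (a - 1) *
      ((1 - t ^ 2 : ℝ) : ℂ) ^ (b - 1)) volume (-1) 1 := by
  intro hi
  have hi2 := hi.mono_set (c := 0) (d := 1) (by
    rw [Set.uIcc_of_le (by norm_num), Set.uIcc_of_le (by norm_num)]
    exact Set.Icc_subset_Icc_left (by norm_num))
  have h0 : ¬ IntervalIntegrable (fun t : ℝ => (t - 1)⁻¹) volume 0 1 := by
    rw [intervalIntegrable_sub_inv_iff]; simp
  apply h0
  rw [intervalIntegrable_iff_integrableOn_Ioo_of_le zero_le_one] at hi2 ⊢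
  refine Integrable.mono' (hi2.norm.const_mul (2 ^ |b.re - 1|)) ?_ ?_
  · apply Measurable.aestronglyMeasurable
    fun_prop
  · refine (ae_restrict_iff' measurableSet_Ioo).mpr (.of_forall fun t ht => ?_)
    obtain ⟨h0, h1⟩ := ht
    have p1 : 0 < 1 - t := by linarith
    have p2 : 0 < 1 + t := by linarith
    rw [mul_one, norm_mul, Complex.norm_cpow_eq_rpow_re_of_pos p1,
      Complex.norm_cpow_eq_rpow_re_of_pos (by nlinarith),
      show 1 - t ^ 2 = (1 - t) * (1 + t) by ring, Real.mul_rpow p1.le p2.le,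
      norm_inv, Real.norm_eq_abs, abs_sub_comm, abs_of_pos p1]
    have e1 : (1 - t)⁻¹ ≤ (1 - t) ^ (a - 1).re * (1 - t) ^ (b - 1).re := by
      rw [← Real.rpow_add p1, ← Real.rpow_neg_one]
      apply Real.rpow_le_rpow_of_exponent_ge p1 (by linarith)
      simp; linarith
    have e2 : 1 ≤ 2 ^ |b.re - 1| * (1 + t) ^ (b - 1).re := by
      have q1 : (1 + t) ^ (-(b - 1).re) ≤ 2 ^ |b.re - 1| :=
        calc (1 + t) ^ (-(b - 1).re) ≤ (1 + t) ^ |b.re - 1| :=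
            Real.rpow_le_rpow_of_exponent_le (by linarith) (by simpa using neg_le_abs (b.re - 1))
        _ ≤ _ := Real.rpow_le_rpow (by linarith) (by linarith) (abs_nonneg _)
      calc 1 = (1 + t) ^ (-(b - 1).re) * (1 + t) ^ (b - 1).re := by
            rw [← Real.rpow_add p2]; simp
        _ ≤ _ := by gcongr
    calc (1 - t)⁻¹ = (1 - t)⁻¹ * 1 := by ring
      _ ≤ ((1 - t) ^ (a - 1).re * (1 - t) ^ (b - 1).re) * (2 ^ |b.re - 1| * (1 + t) ^ (b - 1).re) := by
        gcongr
      _ = _ := by ring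

theorem ne_neg_of_re_pos (s : ℂ) (hs : 0 < s.re) (m : ℕ) : s ≠ -m := by
  rintro rfl
  simp at hs
  have : (0 : ℝ) ≤ m := m.cast_nonneg
  linarith

theorem bad_sum (a b : ℂ) (ha : 0 < a.re) (hb : 0 < b.re) (h : a.re + b.re ≤ 1) :
    ¬ Summable (fun n : ℕ => ((ascPochhammer ℂ n).eval ((1 - a) / 2) *
      (ascPochhammer ℂ n).eval ((2 - a) / 2) /
    ((ascPochhammer ℂ n).eval (b + 1 / 2) * (Nat.factorial n : ℂ)))) := by
  intro hs
  have hA : ((1 - a) / 2).re = (1 - a.re) / 2 := by simp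
  have hB : ((2 - a) / 2).re = (2 - a.re) / 2 := by simp
  have hC : (b + 1 / 2).re = b.re + 1 / 2 := by rw [Complex.add_re]; norm_num
  have pA : 0 < ((1 - a) / 2).re := by rw [hA]; linarith
  have pB : 0 < ((2 - a) / 2).re := by rw [hB]; linarith
  have pC : 0 < (b + 1 / 2).re := by rw [hC]; linarith
  have tA := poch_asymp _ (ne_neg_of_re_pos _ pA)
  have tB := poch_asymp _ (ne_neg_of_re_pos _ pB)
  have tC := poch_asymp _ (ne_neg_of_re_pos _ pC)
  have gA := norm_ne_zero_iff.mpr (Complex.Gamma_ne_zero_of_re_pos pA)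
  have gB := norm_ne_zero_iff.mpr (Complex.Gamma_ne_zero_of_re_pos pB)
  have gC := norm_ne_zero_iff.mpr (Complex.Gamma_ne_zero_of_re_pos pC)
  have t1 := tC.div (tA.mul tB) (mul_ne_zero (inv_ne_zero gA) (inv_ne_zero gB))
  have t2 := (t1.isBigO_one ℝ).mul (Asymptotics.isBigO_refl (fun n : ℕ =>
    ‖(ascPochhammer ℂ n).eval ((1 - a) / 2) *
      (ascPochhammer ℂ n).eval ((2 - a) / 2) /
    ((ascPochhammer ℂ n).eval (b + 1 / 2) * (Nat.factorial n : ℂ))‖) Filter.atTop)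
  have t3 : Summable (fun n : ℕ => (n : ℝ) ^ (-(a.re + b.re))) := by
    refine summable_of_isBigO_nat hs.norm (t2.congr' ?_ (.of_forall fun n => one_mul _))
    filter_upwards [Filter.eventually_gt_atTop 0] with n hn
    have hn' : (0 : ℝ) < n := by exact_mod_cast hn
    have nA := norm_ne_zero_iff.mpr (poch_ne _ pA n)
    have nB := norm_ne_zero_iff.mpr (poch_ne _ pB n)
    have nC := norm_ne_zero_iff.mpr (poch_ne _ pC n)
    have nf : (n.factorial : ℝ) ≠ 0 := by positivity
    simp only [Pi.div_apply]
    rw [norm_div, norm_mul, norm_mul, Complex.norm_natCast]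
    have e : (n : ℝ) ^ (-(a.re + b.re)) = (n : ℝ) ^ (1 - (b + 1 / 2).re) /
        ((n : ℝ) ^ (1 - ((1 - a) / 2).re) * (n : ℝ) ^ (1 - ((2 - a) / 2).re)) := by
      rw [← Real.rpow_add hn', ← Real.rpow_sub hn', hA, hB, hC]
      congr 1; ring
    rw [e]
    have r1 := (Real.rpow_pos_of_pos hn' (1 - ((1 - a) / 2).re)).ne'
    have r2 := (Real.rpow_pos_of_pos hn' (1 - ((2 - a) / 2).re)).ne'
    generalize ‖(ascPochhammer ℂ n).eval ((1 - a) / 2)‖ = y1 at *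
    generalize ‖(ascPochhammer ℂ n).eval ((2 - a) / 2)‖ = y2 at *
    generalize ‖(ascPochhammer ℂ n).eval (b + 1 / 2)‖ = y3 at *
    generalize (n : ℝ) ^ (1 - ((1 - a) / 2).re) = z1 at *
    generalize (n : ℝ) ^ (1 - ((2 - a) / 2).re) = z2 at *
    generalize (n : ℝ) ^ (1 - (b + 1 / 2).re) = z3 at *
    field_simp
  rw [Real.summable_nat_rpow] at t3
  linarith

theorem nonneg_case (a b : ℂ) (ha : 0 < a.re) (hb : 0 < b.re) (x : ℝ) (hx : 0 ≤ x)
    (hx' : x ≤ 1) :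
    (∫ t in (-1 : ℝ)..1, ((1 - t * x : ℝ) : ℂ) ^ (a - 1) * ((1 - t ^ 2 : ℝ) : ℂ) ^ (b - 1)) =
      eulerBeta (1 / 2) b * hyp2F1 ((1 - a) / 2) ((2 - a) / 2) (b + 1 / 2) ((x : ℂ) ^ 2) := by
  by_cases h : x < 1 ∨ 1 < a.re + b.re
  · exact good_case a b ha hb x hx hx' h
  · push Not at h
    obtain rfl : x = 1 := le_antisymm hx' h.1
    rw [intervalIntegral.integral_undef (bad_int a b h.2), hyp2F1, tsum_eq_zero_of_not_summable, mul_zero]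
    simpa using bad_sum a b ha hb h.2

theorem stmt4 (a b : ℂ) (ha : 0 < a.re) (hb : 0 < b.re) (x : ℝ) (hx : -1 ≤ x)
    (hx' : x ≤ 1) :
    (∫ t in (-1 : ℝ)..1, ((1 - t * x : ℝ) : ℂ) ^ (a - 1) * ((1 - t ^ 2 : ℝ) : ℂ) ^ (b - 1)) =
      eulerBeta (1 / 2) b * hyp2F1 ((1 - a) / 2) ((2 - a) / 2) (b + 1 / 2) ((x : ℂ) ^ 2) := by
  rcases le_total 0 x with h | h
  · exact nonneg_case a b ha hb x h hx'
  · have h1 := nonneg_case a b ha hb (-x) (by linarith) (by linarith)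
    rw [Complex.ofReal_neg, neg_sq] at h1
    rw [← h1]
    have := intervalIntegral.integral_comp_neg (a := -1) (b := 1)
      (fun t : ℝ => ((1 - t * x : ℝ) : ℂ) ^ (a - 1) * ((1 - t ^ 2 : ℝ) : ℂ) ^ (b - 1))
    rw [neg_neg] at this
    rw [← this]
    simp only [neg_sq, neg_mul, mul_neg]
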